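/- Let 0 ≤ β < 4 and α₀ > 0, and let a, b : ℝ⁴ → ℝ be continuous functions satisfying (A₁): a(x) ≥ a₀ > 0 and b(x) ≥ b₀ > 0 for all x. There exists a sufficiently large ν₀ > 0 (depending on α₀, β, a, b) with the following property: if f : ℝ⁴ × ℝ → ℝ is continuous, satisfies (H₂) (there exists μ > 2 with 0 < μ F(x,s) ≤ s f(x,s) for all x and s ≠ 0, where F(x,s) = ∫₀^s f(x,t) dt) and (H₃) (there exist R₀, M₀ > 0 with 0 < F(x,s) ≤ M₀|f(x,s)| for all x and |s| ≥ R₀), and if liminf_{s→+∞} s f(x,s) e^{−α₀ s²} > ν₀ uniformly in x ∈ ℝ⁴ (i.e. there exist ν > ν₀ and s₁ > 0 with s f(x,s) e^{−α₀ s²} ≥ ν for all x and all s ≥ s₁), then there exists a smooth compactly supported function φ with ‖φ‖_E = 1 such that sup_{t ≥ 0} ( t²/2 − ∫_{ℝ⁴} F(x, tφ)/|x|^β dx ) < (16π²/α₀)(1 − β/4). -/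

import Mathlib

/-!
The level is beaten by testing with a normalised concentrating sequence. In dimension four,
`u_ε = log (1 / √(|x|² + ε²))`, truncated smoothly at the unit sphere, satisfies
`|Δu_ε|² ≈ 4 / (|x|² + ε²)²`, so that its squared `E`-norm is at most `8π² ℓ + O(1)` where
`ℓ = log (1/ε)`: the gradient and zeroth order terms are `O(1 / (|x|² + ε²))`, whose integral over
the unit ball of `ℝ⁴` is bounded uniformly in `ε` (`adams_density_le`, `integral_adamsMajorant_le`). As
`u_ε ≥ ℓ - 2` on the ball of radius `ε = e^{-ℓ}`, the normalised function `φ` satisfies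
`φ² ≥ H := (ℓ - C) / (8π²)` there (`exists_adams_sequence`), with `C` depending only on `a`, `b`.

Put `Y₀ = 8π²(4 - β)/α₀`, so that the threshold is `Y₀ / 2`. The growth condition and monotonicity of
`F(x, ·)` give, with `z = α₀ H t²`,
`∫ F(x, tφ)/|x|^β ≥ κ e^z / z`, where `κ = (ν/4) |B₁| e^{-(4-β)ℓ}`
(`exists_Fprim_lower_bound`, `le_integral_div_rpow`). The point is that at `t² = Y₀` one has
`z = z₀ = (4 - β)(ℓ - C)`, hence `κ e^{z₀} = (ν/4) |B₁| e^{-(4-β)C}` no longer depends on `ℓ`. As `e^z / z`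
has slope at least `e^{z₀} / (2 z₀)` beyond `z₀` (`exp_div_self_ge`), a choice of `ν₀` depending only
on this constant makes the nonlinear term grow, as a function of `t²`, at least as fast as `t²/2`
beyond `Y₀`. The functional then stays below `Y₀/2 - κ` whenever `t² ≥ Y₀/2`, and below `Y₀/4`
otherwise. Only `ℓ` is chosen in terms of `f`, to reach the range where the bound on `F` holds.
-/

open MeasureTheory Real Filter Topology ENNReal

noncomputable section

/-- Four-dimensional Euclidean space with Lebesgue measure. -/
abbrev R4 : Type := EuclideanSpace ℝ (Fin 4)

/-- The Laplacian of `u : ℝ⁴ → ℝ`, as the sum of the pure second derivatives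
along the coordinate directions. -/
noncomputable def lapl (u : R4 → ℝ) (x : R4) : ℝ :=
  ∑ i : Fin 4, iteratedFDeriv ℝ 2 u x ![EuclideanSpace.single i 1, EuclideanSpace.single i 1]

/-- The squared `E`-norm `∫ (|Δu|² + a|∇u|² + b u²) dx`, as an extended nonnegative real. -/
noncomputable def enorm2 (a b : R4 → ℝ) (u : R4 → ℝ) : ℝ≥0∞ :=
  ∫⁻ x : R4, ENNReal.ofReal ((lapl u x) ^ 2 + a x * ‖gradient u x‖ ^ 2 + b x * (u x) ^ 2)

/-- The primitive `F(x, s) = ∫₀ˢ f(x, t) dt` of a nonlinearity `f`. -/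
noncomputable def Fprim (f : R4 → ℝ → ℝ) (x : R4) (s : ℝ) : ℝ := ∫ t in (0:ℝ)..s, f x t

/-! ### Radial functions and scaling -/

section Radial

lemma hasFDerivAt_radial {g g' : ℝ → ℝ} (hg : ∀ s, 0 ≤ s → HasDerivAt g (g' s) s) (x : R4) :
    HasFDerivAt (fun y : R4 => g (‖y‖ ^ 2)) ((2 * g' (‖x‖ ^ 2)) • innerSL ℝ x) x := by
  have h := (hg (‖x‖ ^ 2) (by positivity)).comp_hasFDerivAt x
    (hasStrictFDerivAt_norm_sq x).hasFDerivAt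
  refine h.congr_fderiv ?_
  ext y
  simp
  ring

lemma norm_gradient_radial {g g' : ℝ → ℝ} (hg : ∀ s, 0 ≤ s → HasDerivAt g (g' s) s) (x : R4) :
    ‖gradient (fun y : R4 => g (‖y‖ ^ 2)) x‖ ^ 2 = 4 * ‖x‖ ^ 2 * g' (‖x‖ ^ 2) ^ 2 := by
  rw [gradient, LinearIsometryEquiv.norm_map, (hasFDerivAt_radial hg x).fderiv, norm_smul,
    innerSL_apply_norm, mul_pow, Real.norm_eq_abs, sq_abs]
  ring

/-- For a radial function `u(x) = g(|x|²)` on `ℝ⁴` one has `Δu = 8 g'(|x|²) + 4|x|² g''(|x|²)`. -/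
lemma lapl_radial {g g' g'' : ℝ → ℝ} (hg : ∀ s, 0 ≤ s → HasDerivAt g (g' s) s)
    (hg' : ∀ s, 0 ≤ s → HasDerivAt g' (g'' s) s) (x : R4) :
    lapl (fun y : R4 => g (‖y‖ ^ 2)) x = 8 * g' (‖x‖ ^ 2) + 4 * ‖x‖ ^ 2 * g'' (‖x‖ ^ 2) := by
  obtain ⟨L, hL⟩ : ∃ L : R4 →L[ℝ] R4 →L[ℝ] ℝ, ∀ y, L y = innerSL ℝ y :=
    ⟨innerSL ℝ, fun _ => rfl⟩
  have h1 : fderiv ℝ (fun y : R4 => g (‖y‖ ^ 2)) = fun y => (2 * g' (‖y‖ ^ 2)) • L y := by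
    funext y
    rw [hL]
    exact (hasFDerivAt_radial hg y).fderiv
  have h2 : HasFDerivAt (fun y : R4 => (2 * g' (‖y‖ ^ 2)) • L y)
      ((2 * g' (‖x‖ ^ 2)) • L +
        ((2 : ℝ) • ((2 * g'' (‖x‖ ^ 2)) • innerSL ℝ x)).smulRight (L x)) x :=
    ((hasFDerivAt_radial hg' x).const_mul 2).smul L.hasFDerivAt
  unfold lapl
  simp only [iteratedFDeriv_two_apply, h1, h2.fderiv]
  simp [hL, Fin.sum_univ_four, EuclideanSpace.inner_single_right, EuclideanSpace.real_norm_sq_eq]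
  ring

lemma enorm2_smul (a b : R4 → ℝ) {u : R4 → ℝ} (hu : ContDiff ℝ (⊤ : ℕ∞) u) (c : ℝ) :
    enorm2 a b (c • u) = ENNReal.ofReal (c ^ 2) * enorm2 a b u := by
  have hl : ∀ x, lapl (c • u) x = c * lapl u x := by
    intro x
    unfold lapl
    rw [Finset.mul_sum]
    refine Finset.sum_congr rfl fun i _ => ?_
    rw [iteratedFDeriv_const_smul_apply (contDiff_infty.1 hu 2).contDiffAt]
    simp
  have hg : ∀ x, ‖gradient (c • u) x‖ ^ 2 = c ^ 2 * ‖gradient u x‖ ^ 2 := by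
    intro x
    rw [gradient, gradient, LinearIsometryEquiv.norm_map, LinearIsometryEquiv.norm_map,
      fderiv_const_smul (hu.differentiable (by simp) x), norm_smul, mul_pow,
      Real.norm_eq_abs, sq_abs]
  unfold enorm2
  rw [← lintegral_const_mul' _ _ ENNReal.ofReal_ne_top]
  refine lintegral_congr fun x => ?_
  rw [← ENNReal.ofReal_mul (sq_nonneg c), hl, hg, Pi.smul_apply, smul_eq_mul]
  congr 1
  ring

end Radial

/-! ### The smooth truncation -/

section Profile

/-- A smooth truncation of the positive part: the primitive of `Real.smoothTransition`, so that
`rampη τ = 0` for `τ ≤ 0` and `rampη' = 1` for `τ ≥ 1`. -/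
def rampη (τ : ℝ) : ℝ := ∫ t in (0:ℝ)..τ, Real.smoothTransition t

lemma hasDerivAt_rampη (τ : ℝ) : HasDerivAt rampη (Real.smoothTransition τ) τ :=
  intervalIntegral.integral_hasDerivAt_right
    (Real.smoothTransition.continuous.intervalIntegrable _ _)
    Real.smoothTransition.continuous.stronglyMeasurable.stronglyMeasurableAtFilter
    Real.smoothTransition.continuous.continuousAt

lemma contDiff_rampη : ContDiff ℝ (⊤ : ℕ∞) rampη := by
  rw [contDiff_infty_iff_deriv]
  have h : deriv rampη = Real.smoothTransition := funext fun τ => (hasDerivAt_rampη τ).deriv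
  exact ⟨fun τ => (hasDerivAt_rampη τ).differentiableAt, h ▸ Real.smoothTransition.contDiff⟩

lemma rampη_monotone : Monotone rampη :=
  monotone_of_hasDerivAt_nonneg hasDerivAt_rampη (fun τ => Real.smoothTransition.nonneg τ)

lemma rampη_zero : rampη 0 = 0 := by simp [rampη]

lemma rampη_of_nonpos {τ : ℝ} (h : τ ≤ 0) : rampη τ = 0 := by
  unfold rampη
  rw [intervalIntegral.integral_congr (g := fun _ => (0:ℝ))]
  · simp
  · intro t ht
    rw [Set.uIcc_of_ge h] at ht
    exact Real.smoothTransition.zero_of_nonpos ht.2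

lemma rampη_nonneg (τ : ℝ) : 0 ≤ rampη τ := by
  rcases le_total τ 0 with h | h
  · rw [rampη_of_nonpos h]
  · rw [← rampη_zero]; exact rampη_monotone h

lemma rampη_le {τ : ℝ} (h : 0 ≤ τ) : rampη τ ≤ τ := by
  have hm : Monotone fun τ => τ - rampη τ :=
    monotone_of_hasDerivAt_nonneg (fun τ => (hasDerivAt_id τ).sub (hasDerivAt_rampη τ))
      (fun τ => by simpa using Real.smoothTransition.le_one τ)
  have := hm h
  simp only [rampη_zero] at this
  linarith

lemma sub_one_le_rampη (τ : ℝ) : τ - 1 ≤ rampη τ := by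
  rcases le_total τ 1 with h | h
  · linarith [rampη_nonneg τ]
  · have hd : ∀ t, HasDerivAt (fun t => rampη t - t) (Real.smoothTransition t - 1) t :=
      fun t => (hasDerivAt_rampη t).sub (hasDerivAt_id t)
    have hm : MonotoneOn (fun t => rampη t - t) (Set.Ici 1) := by
      refine monotoneOn_of_deriv_nonneg (convex_Ici 1)
        (fun t _ => (hd t).continuousAt.continuousWithinAt)
        (fun t _ => (hd t).differentiableAt.differentiableWithinAt) fun t ht => ?_
      rw [interior_Ici] at ht
      rw [(hd t).deriv, Real.smoothTransition.one_of_one_le (le_of_lt ht)]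
      simp
    have := hm (Set.self_mem_Ici) h h
    simp only at this
    linarith [rampη_nonneg 1]

lemma deriv_smoothTransition_of_neg {τ : ℝ} (h : τ < 0) : deriv Real.smoothTransition τ = 0 := by
  have : Real.smoothTransition =ᶠ[𝓝 τ] fun _ => (0:ℝ) := by
    filter_upwards [Iio_mem_nhds h] with t ht
    exact Real.smoothTransition.zero_of_nonpos (le_of_lt ht)
  rw [this.deriv_eq]; simp

lemma deriv_smoothTransition_of_gt {τ : ℝ} (h : 1 < τ) : deriv Real.smoothTransition τ = 0 := by
  have : Real.smoothTransition =ᶠ[𝓝 τ] fun _ => (1:ℝ) := by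
    filter_upwards [Ioi_mem_nhds h] with t ht
    exact Real.smoothTransition.one_of_one_le (le_of_lt ht)
  rw [this.deriv_eq]; simp

/-- The second derivative of the truncation lives on `[0, 1]`, so it is dominated by any positive
continuous weight; the weight `e^{-2τ}` is the one that becomes `|x|² + ε²` at
`τ = -½ log (|x|² + ε²)`. -/
lemma exists_deriv_smoothTransition_bound :
    ∃ M : ℝ, 0 ≤ M ∧ ∀ τ, |deriv Real.smoothTransition τ| ≤ M * Real.exp (-(2 * τ)) := by
  have hc : Continuous (deriv Real.smoothTransition) :=
    (Real.smoothTransition.contDiff (n := 1)).continuous_deriv le_rfl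
  have hs : HasCompactSupport fun τ => deriv Real.smoothTransition τ * Real.exp (2 * τ) := by
    refine HasCompactSupport.intro (isCompact_Icc (a := (0:ℝ)) (b := 1)) fun τ hτ => ?_
    rw [Set.mem_Icc, not_and_or, not_le, not_le] at hτ
    rcases hτ with h | h
    · rw [deriv_smoothTransition_of_neg h, zero_mul]
    · rw [deriv_smoothTransition_of_gt h, zero_mul]
  obtain ⟨M, hM⟩ := hs.exists_bound_of_continuous (by fun_prop)
  refine ⟨M, (norm_nonneg _).trans (hM 0), fun τ => ?_⟩
  have := hM τ
  rw [Real.norm_eq_abs, abs_mul, abs_of_pos (Real.exp_pos _)] at this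
  rw [Real.exp_neg, ← div_eq_mul_inv, le_div_iff₀ (Real.exp_pos _)]
  exact this

end Profile

/-! ### The concentrating sequence -/

section Adams

/-- The concentrating function `log (1 / √(|x|² + ε²))`, with its values below `1` bent smoothly
down to `0` so that it vanishes for `|x|² + ε² ≥ 1`. -/
def adams (ε : ℝ) (x : R4) : ℝ := rampη (-(1 / 2) * Real.log (‖x‖ ^ 2 + ε ^ 2))

lemma contDiff_adams {ε : ℝ} (hε : 0 < ε) : ContDiff ℝ (⊤ : ℕ∞) (adams ε) := by
  refine contDiff_rampη.comp (contDiff_const.mul (ContDiff.log ?_ fun x => ?_))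
  · exact (contDiff_norm_sq ℝ).add contDiff_const
  · positivity

lemma adams_nonneg (ε : ℝ) (x : R4) : 0 ≤ adams ε x := rampη_nonneg _

lemma adams_eq_zero {ε : ℝ} {x : R4} (hx : 1 ≤ ‖x‖) : adams ε x = 0 := by
  refine rampη_of_nonpos ?_
  have : 0 ≤ Real.log (‖x‖ ^ 2 + ε ^ 2) := Real.log_nonneg (by nlinarith [sq_nonneg ε])
  linarith

lemma hasCompactSupport_adams (ε : ℝ) : HasCompactSupport (adams ε) := by
  refine HasCompactSupport.intro (isCompact_closedBall (0 : R4) 1) fun x hx => adams_eq_zero ?_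
  simp only [Metric.mem_closedBall, dist_zero_right, not_le] at hx
  exact hx.le

lemma le_adams {ε : ℝ} (hε : 0 < ε) {x : R4} (hx : ‖x‖ ≤ ε) : -Real.log ε - 2 ≤ adams ε x := by
  have h1 : Real.log (‖x‖ ^ 2 + ε ^ 2) ≤ Real.log (2 * ε ^ 2) := by
    refine Real.log_le_log (by positivity) ?_
    nlinarith [norm_nonneg x]
  rw [Real.log_mul (by norm_num) (by positivity), Real.log_pow] at h1
  have h2 : Real.log 2 ≤ 1 := by linarith [Real.log_le_sub_one_of_pos (x := 2) (by norm_num)]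
  have h3 := sub_one_le_rampη (-(1 / 2) * Real.log (‖x‖ ^ 2 + ε ^ 2))
  unfold adams
  push_cast at h1
  linarith

/-- The radial majorant of the `E`-energy density of `adams ε`. -/
def adamsMajorant (C ε r : ℝ) : ℝ :=
  4 / (r ^ 2 + ε ^ 2) ^ 2 * (1 + 3 * (ε ^ 2 / (r ^ 2 + ε ^ 2))) + C / (r ^ 2 + ε ^ 2) + C

lemma adams_density_le {a b : R4 → ℝ} {M A B : ℝ} (hM : 0 ≤ M) (hA0 : 0 ≤ A) (hB0 : 0 ≤ B)
    (hMτ : ∀ τ, |deriv Real.smoothTransition τ| ≤ M * Real.exp (-(2 * τ)))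
    (hA : ∀ x, ‖x‖ ≤ 1 → a x ≤ A) (hB : ∀ x, ‖x‖ ≤ 1 → b x ≤ B)
    {ε : ℝ} (hε : 0 < ε) (x : R4) :
    (lapl (adams ε) x) ^ 2 + a x * ‖gradient (adams ε) x‖ ^ 2 + b x * (adams ε x) ^ 2 ≤
      (Set.Iic (1:ℝ)).indicator (adamsMajorant (8 * M + A + B + M ^ 2) ε) ‖x‖ := by
  set ρ := Real.smoothTransition with hρ
  set w : ℝ → ℝ := fun s => -(1 / 2) * Real.log (s + ε ^ 2) with hw
  set g' : ℝ → ℝ := fun s => ρ (w s) * (-(1 / 2) / (s + ε ^ 2)) with hg'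
  set g'' : ℝ → ℝ := fun s => deriv ρ (w s) * (-(1 / 2) / (s + ε ^ 2)) * (-(1 / 2) / (s + ε ^ 2)) +
    ρ (w s) * ((1 / 2) / (s + ε ^ 2) ^ 2) with hg''
  have hq : ∀ s : ℝ, 0 ≤ s → 0 < s + ε ^ 2 := fun s hs => by positivity
  have dw : ∀ s, 0 ≤ s → HasDerivAt w (-(1 / 2) / (s + ε ^ 2)) s := by
    intro s hs
    have := (((hasDerivAt_id s).add_const (ε ^ 2)).log (hq s hs).ne').const_mul (-(1 / 2))
    refine this.congr_deriv ?_
    simp only [id]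
    ring
  have d1 : ∀ s, 0 ≤ s → HasDerivAt (fun s => rampη (w s)) (g' s) s := fun s hs =>
    (hasDerivAt_rampη _).comp s (dw s hs)
  have d2 : ∀ s, 0 ≤ s → HasDerivAt g' (g'' s) s := by
    intro s hs
    have hρd : HasDerivAt ρ (deriv ρ (w s)) (w s) :=
      ((Real.smoothTransition.contDiff (n := 1)).differentiable (by simp) _).hasDerivAt
    have h3 := (hρd.comp s (dw s hs)).mul
      ((((hasDerivAt_id s).add_const (ε ^ 2)).inv (hq s hs).ne').const_mul (-(1 / 2)))
    refine h3.congr_deriv ?_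
    simp only [hg'', Function.comp, id, Pi.inv_apply]
    have := (hq s hs).ne'
    field_simp
  have hu : adams ε = fun y : R4 => rampη (w (‖y‖ ^ 2)) := rfl
  have hl := lapl_radial d1 d2 x
  have hgr := norm_gradient_radial d1 x
  rw [← hu] at hl hgr
  rw [hl, hgr]
  have hs0 : 0 ≤ ‖x‖ ^ 2 := by positivity
  rcases lt_or_ge 1 ‖x‖ with hx | hx
  · have hwneg : w (‖x‖ ^ 2) < 0 := by
      have : 0 < Real.log (‖x‖ ^ 2 + ε ^ 2) := Real.log_pos (by nlinarith)
      simp only [hw]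
      linarith
    have e1 : ρ (w (‖x‖ ^ 2)) = 0 := Real.smoothTransition.zero_of_nonpos hwneg.le
    have e2 : deriv ρ (w (‖x‖ ^ 2)) = 0 := deriv_smoothTransition_of_neg hwneg
    rw [Set.indicator_of_notMem (by simpa using hx), adams_eq_zero hx.le]
    simp [hg', hg'', e1, e2]
  rw [Set.indicator_of_mem (by simpa using hx)]
  have hax := hA x hx
  have hbx := hB x hx
  have hexp : Real.exp (-(2 * w (‖x‖ ^ 2))) = ‖x‖ ^ 2 + ε ^ 2 := by
    rw [show -(2 * w (‖x‖ ^ 2)) = Real.log (‖x‖ ^ 2 + ε ^ 2) by simp only [hw]; ring,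
      Real.exp_log (hq _ hs0)]
  have hd := hMτ (w (‖x‖ ^ 2))
  rw [hexp] at hd
  have hρ0 : 0 ≤ ρ (w (‖x‖ ^ 2)) := Real.smoothTransition.nonneg _
  have hρ1 : ρ (w (‖x‖ ^ 2)) ≤ 1 := Real.smoothTransition.le_one _
  -- `η(w)² ≤ e^{2w} = 1 / (|x|² + ε²)`
  have hu2 : adams ε x ^ 2 ≤ 1 / (‖x‖ ^ 2 + ε ^ 2) := by
    have h0 := adams_nonneg ε x
    have h1 : adams ε x ≤ Real.exp (w (‖x‖ ^ 2)) := by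
      change rampη (w (‖x‖ ^ 2)) ≤ _
      rcases le_total (w (‖x‖ ^ 2)) 0 with h | h
      · rw [rampη_of_nonpos h]; positivity
      · linarith [rampη_le h, Real.add_one_le_exp (w (‖x‖ ^ 2))]
    calc adams ε x ^ 2 ≤ Real.exp (w (‖x‖ ^ 2)) ^ 2 := by gcongr
      _ = 1 / Real.exp (-(2 * w (‖x‖ ^ 2))) := by
        rw [Real.exp_neg, one_div, inv_inv, ← Real.exp_nat_mul]; norm_num
      _ = _ := by rw [hexp]
  have hqs := hq _ hs0
  simp only [hg', hg'', adamsMajorant]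
  generalize adams ε x = U at hu2
  generalize ρ (w (‖x‖ ^ 2)) = P at *
  generalize deriv ρ (w (‖x‖ ^ 2)) = D at *
  generalize a x = α at *
  generalize b x = γ at *
  have hsq : ‖x‖ ^ 2 ≤ ‖x‖ ^ 2 + ε ^ 2 := by nlinarith [sq_nonneg ε]
  clear_value ρ
  set q := ‖x‖ ^ 2 + ε ^ 2 with hqdef
  have hqe : ε ^ 2 = q - ‖x‖ ^ 2 := by rw [hqdef]; ring
  have he0 : 0 < ε ^ 2 := by positivity
  generalize ‖x‖ ^ 2 = s at *
  -- with `e = ε² / q`, the Laplacian is `-(2/q)(1 + e) P + (s/q²) D`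
  set e := ε ^ 2 / q with he
  have he1 : e ≤ 1 := by rw [he, div_le_one hqs]; linarith
  have he00 : 0 ≤ e := by positivity
  have hL : 8 * (P * (-(1 / 2) / q)) +
      4 * s * (D * (-(1 / 2) / q) * (-(1 / 2) / q) + P * (1 / 2 / q ^ 2)) =
      -(P * (2 / q * (1 + e))) + D * s / q ^ 2 := by
    rw [he, hqe]
    field_simp
    ring
  have hT : |D * s / q ^ 2| ≤ M := by
    rw [abs_div, abs_mul, abs_of_nonneg hs0, abs_of_pos (by positivity : 0 < q ^ 2),
      div_le_iff₀ (by positivity)]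
    calc |D| * s ≤ M * q * q := by gcongr
      _ = M * q ^ 2 := by ring
  have hX0 : 0 ≤ 2 / q * (1 + e) := by positivity
  have hX1 : 2 / q * (1 + e) ≤ 4 / q := by
    rw [show 4 / q = 2 / q * 2 by ring]
    gcongr
    linarith
  have hLsq : (-(P * (2 / q * (1 + e))) + D * s / q ^ 2) ^ 2 ≤
      4 / q ^ 2 * (1 + 3 * e) + 8 * M / q + M ^ 2 := by
    have h1 : |(-(P * (2 / q * (1 + e))) + D * s / q ^ 2)| ≤ 2 / q * (1 + e) + M := by
      refine (abs_add_le _ _).trans (add_le_add ?_ hT)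
      rw [abs_neg, abs_of_nonneg (by positivity)]
      exact mul_le_of_le_one_left hX0 hρ1
    calc _ = |(-(P * (2 / q * (1 + e))) + D * s / q ^ 2)| ^ 2 := (sq_abs _).symm
      _ ≤ (2 / q * (1 + e) + M) ^ 2 := by gcongr
      _ = (2 / q * (1 + e)) ^ 2 + 2 * M * (2 / q * (1 + e)) + M ^ 2 := by ring
      _ ≤ 4 / q ^ 2 * (1 + 3 * e) + 2 * M * (4 / q) + M ^ 2 := by
        gcongr
        rw [show (2 / q * (1 + e)) ^ 2 = 4 / q ^ 2 * (1 + e) ^ 2 by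
          rw [mul_pow, div_pow]; norm_num]
        gcongr
        nlinarith
      _ = _ := by ring
  have hG : α * (4 * s * (P * (-(1 / 2) / q)) ^ 2) ≤ A / q := by
    have h1 : 4 * s * (P * (-(1 / 2) / q)) ^ 2 = P ^ 2 * (s / q) * (1 / q) := by
      field_simp
      ring
    have h2 : P ^ 2 * (s / q) * (1 / q) ≤ 1 * 1 * (1 / q) := by
      gcongr
      · exact pow_le_one₀ hρ0 hρ1
      · rw [div_le_one hqs]; exact hsq
    rw [h1]
    calc _ ≤ A * (P ^ 2 * (s / q) * (1 / q)) := by gcongr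
      _ ≤ A * (1 * 1 * (1 / q)) := by gcongr
      _ = A / q := by ring
  have hUU : γ * U ^ 2 ≤ B / q := by
    calc _ ≤ B * U ^ 2 := by gcongr
      _ ≤ B * (1 / q) := by gcongr
      _ = B / q := by ring
  rw [hL]
  have hfin : 4 / q ^ 2 * (1 + 3 * e) + (8 * M + A + B + M ^ 2) / q + (8 * M + A + B + M ^ 2) =
      (4 / q ^ 2 * (1 + 3 * e) + 8 * M / q + M ^ 2) + A / q + B / q +
        (M ^ 2 / q + 8 * M + A + B) := by ring
  rw [hfin]
  have : 0 ≤ M ^ 2 / q + 8 * M + A + B := by positivity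
  linarith

/-- `∫_{|x| ≤ 1} 4/(|x|²+ε²)² dx = 8π² log (1/ε) + O(1)` in dimension four; the other terms of the
majorant only contribute to the bounded remainder. -/
lemma integral_adamsMajorant_le {C ε : ℝ} (hC : 0 ≤ C) (hε : 0 < ε) (hε1 : ε ≤ 1) :
    Integrable (fun x : R4 => (Set.Iic (1:ℝ)).indicator (adamsMajorant C ε) ‖x‖) ∧
    ∫ x : R4, (Set.Iic (1:ℝ)).indicator (adamsMajorant C ε) ‖x‖ ≤
      8 * π ^ 2 * (-Real.log ε) + 2 * π ^ 2 * (2 * Real.log 2 + 6 + 2 * C) := by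
  have hcont : Continuous fun r : ℝ => r ^ 3 * adamsMajorant C ε r := by
    unfold adamsMajorant
    have h1 : ∀ r : ℝ, r ^ 2 + ε ^ 2 ≠ 0 := fun r => by positivity
    have h2 : ∀ r : ℝ, (r ^ 2 + ε ^ 2) ^ 2 ≠ 0 := fun r => by positivity
    fun_prop (disch := assumption)
  have hind : ∀ r : ℝ, r ^ (Module.finrank ℝ R4 - 1) • (Set.Iic (1:ℝ)).indicator
      (adamsMajorant C ε) r = (Set.Iic (1:ℝ)).indicator (fun r => r ^ 3 * adamsMajorant C ε r) r := by
    intro r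
    simp only [finrank_euclideanSpace, Fintype.card_fin, smul_eq_mul, Set.indicator]
    split_ifs <;> simp
  constructor
  · rw [integrable_fun_norm_addHaar volume]
    simp only [hind]
    rw [IntegrableOn, integrable_indicator_iff measurableSet_Iic, IntegrableOn,
      Measure.restrict_restrict measurableSet_Iic, Set.inter_comm, Set.Ioi_inter_Iic]
    exact (hcont.integrableOn_Icc (a := 0) (b := 1)).mono_set Set.Ioc_subset_Icc_self
  rw [integral_fun_norm_addHaar volume]
  simp only [hind]
  rw [setIntegral_indicator measurableSet_Iic, Set.Ioi_inter_Iic,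
    ← intervalIntegral.integral_of_le zero_le_one]
  have hvol : (volume : Measure R4).real (Metric.ball 0 1) = π ^ 2 / 2 := by
    rw [Measure.real, EuclideanSpace.volume_ball]
    have : Real.Gamma ((4 : ℕ) / 2 + 1) = 2 := by
      rw [show ((4 : ℕ) : ℝ) / 2 + 1 = (2 : ℕ) + 1 by norm_num, Real.Gamma_nat_eq_factorial]
      norm_num
    rw [Fintype.card_fin, this, show √π ^ 4 = (√π ^ 2) ^ 2 by ring, Real.sq_sqrt pi_pos.le]
    simp [ENNReal.toReal_ofReal (by positivity : 0 ≤ π ^ 2 / 2)]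
  have hq : ∀ r : ℝ, 0 < r ^ 2 + ε ^ 2 := fun r => by positivity
  set G : ℝ → ℝ := fun r => 2 * Real.log (r ^ 2 + ε ^ 2) - 6 * (ε ^ 2 / (r ^ 2 + ε ^ 2)) + 2 * C * r
  set G' : ℝ → ℝ := fun r => 4 * r / (r ^ 2 + ε ^ 2) + 12 * r * ε ^ 2 / (r ^ 2 + ε ^ 2) ^ 2 + 2 * C
    with hG'
  have hG : ∀ r, HasDerivAt G (G' r) r := by
    intro r
    have h0 : HasDerivAt (fun r : ℝ => r ^ 2 + ε ^ 2) (2 * r) r := by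
      simpa using (hasDerivAt_pow 2 r).add_const (ε ^ 2)
    have h := (((h0.log (hq r).ne').const_mul 2).sub
      (((h0.inv (hq r).ne').const_mul (ε ^ 2)).const_mul 6)).add
      ((hasDerivAt_id r).const_mul (2 * C))
    refine (h.congr_deriv ?_)
    simp only [hG']
    field_simp
    ring
  have hG'c : Continuous G' := by
    have h1 : ∀ r : ℝ, r ^ 2 + ε ^ 2 ≠ 0 := fun r => by positivity
    have h2 : ∀ r : ℝ, (r ^ 2 + ε ^ 2) ^ 2 ≠ 0 := fun r => by positivity
    simp only [hG']
    fun_prop (disch := assumption)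
  have hle : ∫ r in (0:ℝ)..1, r ^ 3 * adamsMajorant C ε r ≤ ∫ r in (0:ℝ)..1, G' r := by
    refine intervalIntegral.integral_mono_on zero_le_one (hcont.intervalIntegrable _ _)
      (hG'c.intervalIntegrable _ _) fun r hr => ?_
    have hr0 : 0 ≤ r := hr.1
    have hr1 : r ≤ 1 := hr.2
    simp only [hG', adamsMajorant]
    have hqr := hq r
    have hrq : r ^ 2 ≤ r ^ 2 + ε ^ 2 := by nlinarith [sq_nonneg ε]
    generalize r ^ 2 + ε ^ 2 = q at *
    have hrq1 : r ^ 2 / q ≤ 1 := by rw [div_le_one hqr]; exact hrq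
    have hrq0 : 0 ≤ r ^ 2 / q := by positivity
    have e1 : r ^ 3 * (4 / q ^ 2 * (1 + 3 * (ε ^ 2 / q)) + C / q + C) =
        (r ^ 2 / q) * (4 * r / q) + (r ^ 2 / q) * (12 * r * ε ^ 2 / q ^ 2) +
          ((r ^ 2 / q) * (C * r) + C * r ^ 3) := by
      field_simp
      ring
    rw [e1]
    have t1 : (r ^ 2 / q) * (4 * r / q) ≤ 4 * r / q := mul_le_of_le_one_left (by positivity) hrq1
    have t2 : (r ^ 2 / q) * (12 * r * ε ^ 2 / q ^ 2) ≤ 12 * r * ε ^ 2 / q ^ 2 :=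
      mul_le_of_le_one_left (by positivity) hrq1
    have t3 : (r ^ 2 / q) * (C * r) ≤ C * r := mul_le_of_le_one_left (by positivity) hrq1
    have t4 : C * r ≤ C := mul_le_of_le_one_right hC hr1
    have t5 : C * r ^ 3 ≤ C := mul_le_of_le_one_right hC (pow_le_one₀ hr0 hr1)
    linarith
  rw [intervalIntegral.integral_eq_sub_of_hasDerivAt (fun r _ => hG r)
    (hG'c.intervalIntegrable _ _)] at hle
  have hval : G 1 - G 0 ≤ 4 * (-Real.log ε) + (2 * Real.log 2 + 6 + 2 * C) := by
    have h1 : Real.log (1 ^ 2 + ε ^ 2) ≤ Real.log 2 :=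
      Real.log_le_log (by positivity) (by nlinarith)
    have h2 : Real.log (0 ^ 2 + ε ^ 2) = 2 * Real.log ε := by
      rw [zero_pow (by norm_num), zero_add, Real.log_pow]; norm_num
    have h3 : ε ^ 2 / (0 ^ 2 + ε ^ 2) = 1 := by
      rw [zero_pow (by norm_num), zero_add, div_self (by positivity)]
    have h4 : 0 ≤ ε ^ 2 / (1 ^ 2 + ε ^ 2) := by positivity
    simp only [G, h2, h3]
    generalize ε ^ 2 / (1 ^ 2 + ε ^ 2) = y at *
    generalize Real.log (1 ^ 2 + ε ^ 2) = z at *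
    linarith
  have hpi : 0 < π ^ 2 := by positivity
  rw [hvol, finrank_euclideanSpace, Fintype.card_fin, nsmul_eq_mul, smul_eq_mul]
  have := mul_le_mul_of_nonneg_left (hle.trans hval) (by positivity : 0 ≤ 2 * π ^ 2)
  push_cast
  linarith

/-- The normalised concentrating sequence. For every large `ℓ` there is a bump of unit `E`-norm
whose height on the ball of radius `e^{-ℓ}` has square at least `(ℓ - C) / (8π²)`, with `C`
independent of `ℓ`. -/
lemma exists_adams_sequence (a b : R4 → ℝ) (ha : Continuous a) (hb : Continuous b)
    (a₀ b₀ : ℝ) (ha₀ : 0 < a₀) (hb₀ : 0 < b₀) (haa : ∀ x, a₀ ≤ a x) (hbb : ∀ x, b₀ ≤ b x) :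
    ∃ C : ℝ, 2 ≤ C ∧ ∀ ℓ : ℝ, C < ℓ → ∃ φ : R4 → ℝ, ContDiff ℝ (⊤ : ℕ∞) φ ∧
      HasCompactSupport φ ∧ enorm2 a b φ = 1 ∧ (∀ x, 0 ≤ φ x) ∧
      ∀ x, ‖x‖ ≤ Real.exp (-ℓ) → √((ℓ - C) / (8 * π ^ 2)) ≤ φ x := by
  obtain ⟨M, hM, hMτ⟩ := exists_deriv_smoothTransition_bound
  obtain ⟨A, hA⟩ := (isCompact_closedBall (0 : R4) 1).exists_bound_of_continuousOn ha.continuousOn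
  obtain ⟨B, hB⟩ := (isCompact_closedBall (0 : R4) 1).exists_bound_of_continuousOn hb.continuousOn
  have h00 : (0 : R4) ∈ Metric.closedBall (0 : R4) 1 := by simp
  have hA0 : 0 ≤ A := (norm_nonneg _).trans (hA 0 h00)
  have hB0 : 0 ≤ B := (norm_nonneg _).trans (hB 0 h00)
  set C₀ := 8 * M + A + B + M ^ 2 with hC₀
  have hC₀0 : 0 ≤ C₀ := by positivity
  set C₁ := 2 * π ^ 2 * (2 * Real.log 2 + 6 + 2 * C₀) with hC₁
  have hlog2 : 0 < Real.log 2 := Real.log_pos (by norm_num)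
  have hC₁0 : 0 < C₁ := by positivity
  have hpi : 0 < 8 * π ^ 2 := by positivity
  have hC₁' : 0 ≤ C₁ / (8 * π ^ 2) := by positivity
  refine ⟨4 + C₁ / (8 * π ^ 2), by linarith, fun ℓ hℓ => ?_⟩
  have hℓ4 : 4 < ℓ := by linarith
  set ε := Real.exp (-ℓ) with hε
  have hεpos : 0 < ε := Real.exp_pos _
  have hε1 : ε ≤ 1 := by rw [hε, Real.exp_le_one_iff]; linarith
  have hlogε : -Real.log ε = ℓ := by rw [hε, Real.log_exp]; ring
  obtain ⟨hint, hintle⟩ := integral_adamsMajorant_le hC₀0 hεpos hε1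
  rw [hlogε, ← hC₁] at hintle
  have hdens := adams_density_le (a := a) (b := b) hM hA0 hB0 hMτ
    (fun x hx => (le_abs_self _).trans (hA x (by simpa using hx)))
    (fun x hx => (le_abs_self _).trans (hB x (by simpa using hx))) hεpos
  have hEle : enorm2 a b (adams ε) ≤ ENNReal.ofReal (8 * π ^ 2 * ℓ + C₁) := by
    calc enorm2 a b (adams ε) ≤ ∫⁻ x : R4, ENNReal.ofReal
          ((Set.Iic (1:ℝ)).indicator (adamsMajorant C₀ ε) ‖x‖) :=
        lintegral_mono fun x => ENNReal.ofReal_le_ofReal (hdens x)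
      _ = ENNReal.ofReal (∫ x : R4, (Set.Iic (1:ℝ)).indicator (adamsMajorant C₀ ε) ‖x‖) := by
        rw [ofReal_integral_eq_lintegral_ofReal hint]
        refine Filter.Eventually.of_forall fun x => Set.indicator_nonneg (fun r _ => ?_) _
        unfold adamsMajorant
        positivity
      _ ≤ _ := ENNReal.ofReal_le_ofReal hintle
  have hElb : 0 < enorm2 a b (adams ε) := by
    have h1 : ∀ x ∈ Metric.closedBall (0 : R4) ε, ENNReal.ofReal b₀ ≤ ENNReal.ofReal
        ((lapl (adams ε) x) ^ 2 + a x * ‖gradient (adams ε) x‖ ^ 2 + b x * (adams ε x) ^ 2) := by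
      intro x hx
      refine ENNReal.ofReal_le_ofReal ?_
      have h2 := le_adams hεpos (x := x) (by simpa using hx)
      have h3 : 1 ≤ adams ε x := by linarith
      have h4 : 0 ≤ a x * ‖gradient (adams ε) x‖ ^ 2 :=
        mul_nonneg (ha₀.le.trans (haa x)) (sq_nonneg _)
      have h5 : b₀ * 1 ≤ b x * (adams ε x) ^ 2 :=
        mul_le_mul (hbb x) (one_le_pow₀ h3) zero_le_one (hb₀.le.trans (hbb x))
      nlinarith [sq_nonneg (lapl (adams ε) x)]
    have h6 : 0 < ENNReal.ofReal b₀ * volume (Metric.closedBall (0 : R4) ε) :=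
      ENNReal.mul_pos (by simpa using hb₀) (Metric.measure_closedBall_pos _ _ hεpos).ne'
    refine h6.trans_le ?_
    rw [← setLIntegral_const]
    exact (setLIntegral_mono' measurableSet_closedBall h1).trans (setLIntegral_le_lintegral _ _)
  have hEtop : enorm2 a b (adams ε) ≠ ⊤ := ne_top_of_le_ne_top ENNReal.ofReal_ne_top hEle
  set N := (enorm2 a b (adams ε)).toReal with hN
  have hNpos : 0 < N := ENNReal.toReal_pos hElb.ne' hEtop
  have hNle : N ≤ 8 * π ^ 2 * ℓ + C₁ := by
    rw [hN]
    exact ENNReal.toReal_le_of_le_ofReal (by positivity) hEle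
  refine ⟨(√N)⁻¹ • adams ε, contDiff_const.smul (contDiff_adams hεpos),
    (hasCompactSupport_adams ε).smul_left (f := fun _ => (√N)⁻¹), ?_, fun x => ?_, fun x hx => ?_⟩
  · rw [enorm2_smul a b (contDiff_adams hεpos), inv_pow, Real.sq_sqrt hNpos.le,
      ← ENNReal.ofReal_toReal hEtop, ← hN, ← ENNReal.ofReal_mul (by positivity),
      inv_mul_cancel₀ hNpos.ne', ENNReal.ofReal_one]
  · exact mul_nonneg (by positivity) (adams_nonneg ε x)
  · have h1 := le_adams hεpos hx
    rw [hlogε] at h1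
    rw [Pi.smul_apply, smul_eq_mul]
    refine le_trans ?_ (mul_le_mul_of_nonneg_left h1 (by positivity))
    have h8 : 0 ≤ (√N)⁻¹ * (ℓ - 2) := mul_nonneg (by positivity) (by linarith)
    refine Real.sqrt_le_iff.2 ⟨h8, ?_⟩
    rw [mul_pow, inv_pow, Real.sq_sqrt hNpos.le, div_le_iff₀ hpi, inv_mul_eq_div,
      div_mul_eq_mul_div, le_div_iff₀ hNpos]
    have h7 : 0 < ℓ - (4 + C₁ / (8 * π ^ 2)) := by linarith
    calc _ ≤ (ℓ - (4 + C₁ / (8 * π ^ 2))) * (8 * π ^ 2 * ℓ + C₁) := by gcongr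
      _ ≤ (ℓ - 2) ^ 2 * (8 * π ^ 2) := by
        have : C₁ = (C₁ / (8 * π ^ 2)) * (8 * π ^ 2) := by field_simp
        generalize C₁ / (8 * π ^ 2) = c at *
        rw [this]
        have : (ℓ - (4 + c)) * (ℓ + c) ≤ (ℓ - 2) ^ 2 := by nlinarith
        calc _ = ((ℓ - (4 + c)) * (ℓ + c)) * (8 * π ^ 2) := by ring
          _ ≤ _ := by gcongr

end Adams

/-! ### Lower bounds for the nonlinear term -/

section Nonlinearity

lemma continuous_Fprim_comp {f : R4 → ℝ → ℝ} (hf : Continuous (Function.uncurry f))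
    {s : R4 → ℝ} (hs : Continuous s) : Continuous fun x => Fprim f x (s x) :=
  intervalIntegral.continuous_parametric_intervalIntegral_of_continuous hf hs

lemma hasDerivAt_Fprim {f : R4 → ℝ → ℝ} (hf : Continuous (Function.uncurry f)) (x : R4) (s : ℝ) :
    HasDerivAt (Fprim f x) (f x s) s := by
  have hc : Continuous (f x) := hf.comp (Continuous.prodMk_right x)
  exact intervalIntegral.integral_hasDerivAt_right (hc.intervalIntegrable _ _)
    hc.stronglyMeasurable.stronglyMeasurableAtFilter hc.continuousAt

lemma Fprim_zero (f : R4 → ℝ → ℝ) (x : R4) : Fprim f x 0 = 0 := by simp [Fprim]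

/-- Consequences of the Ambrosetti–Rabinowitz condition: `F ≥ 0`, and `F(x, ·)` is nondecreasing on
`[0, ∞)`. -/
lemma Fprim_nonneg_mono {f : R4 → ℝ → ℝ} (hf : Continuous (Function.uncurry f))
    (h2 : ∃ μ : ℝ, 2 < μ ∧ ∀ x : R4, ∀ s : ℝ, s ≠ 0 →
        0 < μ * Fprim f x s ∧ μ * Fprim f x s ≤ s * f x s) :
    (∀ x s, 0 ≤ Fprim f x s) ∧ ∀ x, MonotoneOn (Fprim f x) (Set.Ici 0) := by
  obtain ⟨μ, hμ, h⟩ := h2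
  refine ⟨fun x s => ?_, fun x => ?_⟩
  · rcases eq_or_ne s 0 with rfl | hs
    · rw [Fprim_zero]
    · exact (pos_of_mul_pos_right (h x s hs).1 (by linarith)).le
  · refine monotoneOn_of_deriv_nonneg (convex_Ici 0)
      (fun t _ => (hasDerivAt_Fprim hf x t).continuousAt.continuousWithinAt)
      (fun t _ => (hasDerivAt_Fprim hf x t).differentiableAt.differentiableWithinAt) fun t ht => ?_
    rw [interior_Ici] at ht
    rw [(hasDerivAt_Fprim hf x t).deriv]
    have ht0 : (0:ℝ) < t := ht
    have := h x t ht0.ne'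
    exact (pos_of_mul_pos_right (this.1.trans_le this.2) ht0.le).le

/-- The critical growth of `f` gives `F(x, s) ≥ (ν/4) e^{α₀s²} / (α₀ s²)` for all large `s`, since
`(e^{α₀s²} / (α₀ s²))' ≤ 2 e^{α₀s²} / s`. -/
lemma exists_Fprim_lower_bound {f : R4 → ℝ → ℝ} (hf : Continuous (Function.uncurry f))
    (hF : ∀ x s, 0 ≤ Fprim f x s) {α₀ ν s₁ : ℝ} (hα₀ : 0 < α₀) (hν : 0 < ν) (hs₁ : 0 < s₁)
    (h : ∀ x : R4, ∀ s : ℝ, s₁ ≤ s → ν ≤ s * f x s * Real.exp (-(α₀ * s ^ 2))) :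
    ∃ z₂ : ℝ, 0 < z₂ ∧ ∀ x : R4, ∀ s : ℝ, 0 ≤ s → z₂ ≤ α₀ * s ^ 2 →
      ν / 4 * (Real.exp (α₀ * s ^ 2) / (α₀ * s ^ 2)) ≤ Fprim f x s := by
  have htend := Real.tendsto_exp_div_pow_atTop 1
  simp only [pow_one] at htend
  obtain ⟨z₀, hz₀⟩ := (htend.eventually_ge_atTop
    (2 * (Real.exp (α₀ * s₁ ^ 2) / (α₀ * s₁ ^ 2)))).exists_forall_of_atTop
  have hz1 : 0 < α₀ * s₁ ^ 2 := by positivity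
  refine ⟨max z₀ (α₀ * s₁ ^ 2), lt_max_of_lt_right hz1, fun x s hs hzs => ?_⟩
  have hss : s₁ ≤ s := by
    have := (le_max_right _ _).trans hzs
    have := le_of_mul_le_mul_left this hα₀
    exact (pow_le_pow_iff_left₀ hs₁.le hs two_ne_zero).1 this
  have hE := hz₀ _ ((le_max_left _ _).trans hzs)
  have hEd : ∀ t, s₁ ≤ t → HasDerivAt (fun t => Real.exp (α₀ * t ^ 2) / (α₀ * t ^ 2))
      (2 * Real.exp (α₀ * t ^ 2) / t - 2 * Real.exp (α₀ * t ^ 2) / (α₀ * t ^ 3)) t := by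
    intro t ht
    have ht0 : 0 < t := hs₁.trans_le ht
    have h0 : HasDerivAt (fun t : ℝ => α₀ * t ^ 2) (α₀ * (2 * t)) t := by
      simpa using (hasDerivAt_pow 2 t).const_mul α₀
    refine (h0.exp.div h0 (by positivity)).congr_deriv ?_
    field_simp
  have hd : ∀ t, s₁ ≤ t → HasDerivAt
      (fun t => Fprim f x t - ν / 2 * (Real.exp (α₀ * t ^ 2) / (α₀ * t ^ 2)))
      (f x t - ν / 2 * (2 * Real.exp (α₀ * t ^ 2) / t -
        2 * Real.exp (α₀ * t ^ 2) / (α₀ * t ^ 3))) t := fun t ht =>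
    (hasDerivAt_Fprim hf x t).sub ((hEd t ht).const_mul (ν / 2))
  have hm : MonotoneOn (fun t => Fprim f x t - ν / 2 * (Real.exp (α₀ * t ^ 2) / (α₀ * t ^ 2)))
      (Set.Ici s₁) := by
    refine monotoneOn_of_deriv_nonneg (convex_Ici s₁)
      (fun t ht => (hd t ht).continuousAt.continuousWithinAt)
      (fun t ht => (hd t (interior_subset ht)).differentiableAt.differentiableWithinAt)
      fun t ht => ?_
    have ht1 : s₁ ≤ t := interior_subset ht
    have ht0 : 0 < t := hs₁.trans_le ht1
    rw [(hd t ht1).deriv]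
    have h3 := h x t ht1
    rw [Real.exp_neg, ← div_eq_mul_inv, le_div_iff₀ (Real.exp_pos _)] at h3
    have h4 : ν * Real.exp (α₀ * t ^ 2) / t ≤ f x t := by
      rw [div_le_iff₀ ht0]
      linarith
    have h5 : 0 ≤ ν * Real.exp (α₀ * t ^ 2) / (α₀ * t ^ 3) := by positivity
    have h6 : f x t - ν / 2 * (2 * Real.exp (α₀ * t ^ 2) / t -
        2 * Real.exp (α₀ * t ^ 2) / (α₀ * t ^ 3)) =
        f x t - ν * Real.exp (α₀ * t ^ 2) / t + ν * Real.exp (α₀ * t ^ 2) / (α₀ * t ^ 3) := by ring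
    rw [h6]
    linarith
  have := hm (Set.self_mem_Ici) hss hss
  simp only at this
  have hF1 := hF x s₁
  have h7 := mul_le_mul_of_nonneg_left hE (by positivity : 0 ≤ ν / 4)
  linarith

/-- A continuous compactly supported function stays integrable against `|x|^{-β}`, `β < 4`. -/
lemma integrable_div_rpow {G : R4 → ℝ} (hG : Continuous G) (hs : HasCompactSupport G) {β : ℝ}
    (hβ4 : β < 4) : Integrable fun x : R4 => G x / ‖x‖ ^ β := by
  have hloc : LocallyIntegrable (fun x : R4 => ‖x‖ ^ (-β)) := by
    refine locallyIntegrable_of_norm_le_rpow (C := 1) (α := β) (by simp) (by simpa using hβ4)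
      (Filter.Eventually.of_forall fun x => ?_)
      (measurable_norm.pow_const (-β)).aestronglyMeasurable
    rw [one_mul, Real.norm_of_nonneg (by positivity)]
  have := hloc.integrable_smul_left_of_hasCompactSupport hG hs
  refine this.congr (Filter.Eventually.of_forall fun x => ?_)
  simp only [smul_eq_mul, Real.rpow_neg (norm_nonneg x), div_eq_mul_inv]

/-- A nonnegative function bounded below by `c` on the ball of radius `r` has weighted integral at
least `c |B₁| r^{4-β}`. -/
lemma le_integral_div_rpow {G : R4 → ℝ} {β r c : ℝ} (hβ0 : 0 ≤ β) (hr : 0 < r)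
    (hG0 : ∀ x, 0 ≤ G x) (hG : ∀ x, ‖x‖ ≤ r → c ≤ G x)
    (hint : Integrable fun x : R4 => G x / ‖x‖ ^ β) :
    c * (volume (Metric.ball (0 : R4) 1)).toReal * r ^ (4 - β) ≤ ∫ x : R4, G x / ‖x‖ ^ β := by
  have h0 : ∀ᵐ x : R4, x ≠ 0 := by
    simp [ae_iff]
  have h1 : ∫ x in Metric.closedBall (0 : R4) r, c / r ^ β ≤
      ∫ x in Metric.closedBall (0 : R4) r, G x / ‖x‖ ^ β := by
    refine setIntegral_mono_on_ae ?_ hint.integrableOn measurableSet_closedBall ?_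
    · exact integrableOn_const (isCompact_closedBall _ _).measure_lt_top.ne
    filter_upwards [h0] with x hx hxr
    have hxr' : ‖x‖ ≤ r := by simpa using hxr
    have hx0 : 0 < ‖x‖ := norm_pos_iff.2 hx
    have := hG x hxr'
    have hGx := hG0 x
    gcongr
  have h2 : ∫ x in Metric.closedBall (0 : R4) r, G x / ‖x‖ ^ β ≤ ∫ x : R4, G x / ‖x‖ ^ β :=
    setIntegral_le_integral hint
      (Filter.Eventually.of_forall fun x => div_nonneg (hG0 x) (by positivity))
  refine le_trans (le_of_eq ?_) (h1.trans h2)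
  rw [setIntegral_const, Measure.addHaar_real_closedBall _ _ hr.le, finrank_euclideanSpace,
    Fintype.card_fin, Real.rpow_sub hr, smul_eq_mul, Measure.real]
  norm_num
  ring

end Nonlinearity

/-- Exponential growth dominates: an affine minorant of `e^z / z` beyond `z₀ ≥ 2`. -/
lemma exp_div_self_ge {z₀ z : ℝ} (h2 : 2 ≤ z₀) (hz : z₀ ≤ z) :
    Real.exp z₀ / z₀ * (1 + (z - z₀) / 2) ≤ Real.exp z / z := by
  have hz₀ : 0 < z₀ := by linarith
  have hzp : 0 < z := by linarith
  rw [le_div_iff₀ hzp, div_mul_eq_mul_div, div_mul_eq_mul_div, div_le_iff₀ hz₀]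
  have h1 : Real.exp z = Real.exp z₀ * (Real.exp ((z - z₀) / 2)) ^ 2 := by
    rw [← Real.exp_nat_mul, ← Real.exp_add]
    congr 1
    push_cast
    ring
  have h3 : (1 + (z - z₀) / 2) ^ 2 ≤ (Real.exp ((z - z₀) / 2)) ^ 2 := by
    have := Real.add_one_le_exp ((z - z₀) / 2)
    refine pow_le_pow_left₀ (by linarith) (by linarith) 2
  have h4 : (1 + (z - z₀) / 2) * z ≤ (1 + (z - z₀) / 2) ^ 2 * z₀ := by
    have h5 : z ≤ (1 + (z - z₀) / 2) * z₀ := by nlinarith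
    rw [sq, mul_assoc]
    exact mul_le_mul_of_nonneg_left h5 (by linarith)
  rw [h1]
  have hp := Real.exp_pos z₀
  calc Real.exp z₀ * (1 + (z - z₀) / 2) * z = Real.exp z₀ * ((1 + (z - z₀) / 2) * z) := by ring
    _ ≤ Real.exp z₀ * ((1 + (z - z₀) / 2) ^ 2 * z₀) := by gcongr
    _ ≤ Real.exp z₀ * ((Real.exp ((z - z₀) / 2)) ^ 2 * z₀) := by gcongr
    _ = _ := by ring

/-! ### The min-max level -/

/-- Lemma 3.4 (min-max level estimate): there is `ν₀ > 0` such that for every continuous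
nonlinearity `f` satisfying `(H₂)`, `(H₃)` and `liminf_{s→+∞} s f(x,s) e^{−α₀s²} > ν₀`
uniformly in `x`, some smooth compactly supported `φ` with `‖φ‖_E = 1` satisfies
`sup_{t ≥ 0} (t²/2 − ∫ F(x,tφ)/|x|^β dx) < (16π²/α₀)(1 − β/4)`. -/
theorem stmt_15 (β α₀ : ℝ) (hβ0 : 0 ≤ β) (hβ4 : β < 4) (hα₀ : 0 < α₀)
    (a b : R4 → ℝ) (ha : Continuous a) (hb : Continuous b)
    (a₀ b₀ : ℝ) (ha₀ : 0 < a₀) (hb₀ : 0 < b₀)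
    (haa : ∀ x, a₀ ≤ a x) (hbb : ∀ x, b₀ ≤ b x) :
    ∃ ν₀ : ℝ, 0 < ν₀ ∧ ∀ f : R4 → ℝ → ℝ, Continuous (Function.uncurry f) →
      (∃ μ : ℝ, 2 < μ ∧ ∀ x : R4, ∀ s : ℝ, s ≠ 0 →
        0 < μ * Fprim f x s ∧ μ * Fprim f x s ≤ s * f x s) →
      (∃ R₀ M₀ : ℝ, 0 < R₀ ∧ 0 < M₀ ∧ ∀ x : R4, ∀ s : ℝ, R₀ ≤ |s| →
        0 < Fprim f x s ∧ Fprim f x s ≤ M₀ * |f x s|) →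
      (∃ ν s₁ : ℝ, ν₀ < ν ∧ 0 < s₁ ∧ ∀ x : R4, ∀ s : ℝ, s₁ ≤ s →
        ν ≤ s * f x s * Real.exp (-(α₀ * s ^ 2))) →
      ∃ φ : R4 → ℝ, ContDiff ℝ (⊤ : ℕ∞) φ ∧ HasCompactSupport φ ∧ enorm2 a b φ = 1 ∧
        ∃ K : ℝ, K < (16 * π ^ 2 / α₀) * (1 - β / 4) ∧
          ∀ t : ℝ, 0 ≤ t →
            t ^ 2 / 2 - (∫ x : R4, Fprim f x (t * φ x) / ‖x‖ ^ β) ≤ K := by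
  obtain ⟨C, hC2, hseq⟩ := exists_adams_sequence a b ha hb a₀ b₀ ha₀ hb₀ haa hbb
  have h4β : 0 < 4 - β := by linarith
  set V := (volume (Metric.ball (0 : R4) 1)).toReal with hV
  have hVpos : 0 < V := ENNReal.toReal_pos (Metric.measure_ball_pos _ _ one_pos).ne'
    measure_ball_lt_top.ne
  -- `Y₀ / 2` is the threshold level
  set Y₀ := 8 * π ^ 2 * (4 - β) / α₀ with hY₀
  have hY₀pos : 0 < Y₀ := by positivity
  set c₁ := Real.exp (-((4 - β) * C)) with hc₁
  have hc₁pos : 0 < c₁ := Real.exp_pos _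
  refine ⟨4 * Y₀ / (V * c₁), by positivity, fun f hf h2 _ h3 => ?_⟩
  obtain ⟨ν, s₁, hν, hs₁, hfl⟩ := h3
  have hνpos : 0 < ν := lt_trans (by positivity) hν
  rw [div_lt_iff₀ (by positivity)] at hν
  obtain ⟨hF0, hFm⟩ := Fprim_nonneg_mono hf h2
  obtain ⟨z₂, hz₂, hFl⟩ := exists_Fprim_lower_bound hf hF0 hα₀ hνpos hs₁ hfl
  -- the concentration parameter is chosen so that `α₀ t² height² ≥ max z₂ 2` once `t² ≥ Y₀ / 2`
  set ℓ := C + 2 * (z₂ + 2) / (4 - β) with hℓ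
  have hℓC : C < ℓ := by
    rw [hℓ]
    exact lt_add_of_pos_right _ (by positivity)
  obtain ⟨φ, hφs, hφc, hφE, hφ0, hφl⟩ := hseq ℓ hℓC
  refine ⟨φ, hφs, hφc, hφE, ?_⟩
  set H := (ℓ - C) / (8 * π ^ 2) with hH
  have hHpos : 0 < H := by
    rw [hH, hℓ, add_sub_cancel_left]
    positivity
  set z₀ := α₀ * Y₀ * H with hz₀
  have hz₀' : z₀ = (4 - β) * (ℓ - C) := by
    rw [hz₀, hY₀, hH]
    field_simp
  have hz₀'' : z₀ = 2 * (z₂ + 2) := by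
    rw [hz₀', hℓ]
    field_simp
    ring
  set κ := ν / 4 * V * Real.exp (-ℓ) ^ (4 - β) with hκ
  have hκpos : 0 < κ := by positivity
  have hκz : κ * Real.exp z₀ = ν / 4 * (V * c₁) := by
    rw [hκ, ← Real.exp_mul, hz₀', mul_assoc, ← Real.exp_add, hc₁]
    ring_nf
  -- lower bound for the nonlinear term in terms of `z = α₀ t² height²`
  have key : ∀ t : ℝ, 0 ≤ t → z₂ ≤ α₀ * H * t ^ 2 →
      κ * (Real.exp (α₀ * H * t ^ 2) / (α₀ * H * t ^ 2)) ≤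
        ∫ x : R4, Fprim f x (t * φ x) / ‖x‖ ^ β := by
    intro t ht hz
    have hcont : Continuous fun x => Fprim f x (t * φ x) :=
      continuous_Fprim_comp hf (continuous_const.mul hφs.continuous)
    have hsupp : HasCompactSupport fun x => Fprim f x (t * φ x) := by
      refine hφc.mono fun x hx hx0 => hx ?_
      simp only at hx0 ⊢
      rw [hx0, mul_zero, Fprim_zero]
    have hsq : α₀ * (t * √H) ^ 2 = α₀ * H * t ^ 2 := by
      rw [mul_pow, Real.sq_sqrt hHpos.le]
      ring
    have := le_integral_div_rpow (G := fun x => Fprim f x (t * φ x)) (β := β)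
      (r := Real.exp (-ℓ)) (c := ν / 4 * (Real.exp (α₀ * H * t ^ 2) / (α₀ * H * t ^ 2))) hβ0
      (Real.exp_pos _) (fun x => hF0 _ _) ?_
      (integrable_div_rpow hcont hsupp hβ4)
    · refine le_trans (le_of_eq ?_) this
      rw [hκ, hV]
      ring
    · intro x hx
      have h5 := hFl x (t * √H) (by positivity) (by rw [hsq]; exact hz)
      rw [hsq] at h5
      refine h5.trans (hFm x ?_ ?_ ?_)
      · exact Set.mem_Ici.2 (by positivity)
      · exact Set.mem_Ici.2 (mul_nonneg ht (hφ0 x))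
      · exact mul_le_mul_of_nonneg_left (hφl x hx) ht
  have hlevel : 16 * π ^ 2 / α₀ * (1 - β / 4) = Y₀ / 2 := by
    rw [hY₀]
    field_simp
    ring
  have hG0 : ∀ t : ℝ, 0 ≤ ∫ x : R4, Fprim f x (t * φ x) / ‖x‖ ^ β := fun t =>
    integral_nonneg fun x => div_nonneg (hF0 _ _) (by positivity)
  refine ⟨max (Y₀ / 4) (Y₀ / 2 - κ), ?_, fun t ht => ?_⟩
  · rw [hlevel]
    exact max_lt (by linarith) (by linarith)
  rcases le_total (t ^ 2) (Y₀ / 2) with h6 | h6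
  · exact le_max_of_le_left (by linarith [hG0 t])
  refine le_max_of_le_right ?_
  have hαH : 0 < α₀ * H := by positivity
  have hzt : z₂ + 2 ≤ α₀ * H * t ^ 2 := by
    have h7 : α₀ * H * (Y₀ / 2) ≤ α₀ * H * t ^ 2 := by gcongr
    have h8 : α₀ * H * (Y₀ / 2) = z₂ + 2 := by
      have : α₀ * H * (Y₀ / 2) = z₀ / 2 := by rw [hz₀]; ring
      rw [this, hz₀'']
      ring
    linarith
  have hk := key t ht (by linarith)
  have hone : ∀ z : ℝ, 0 < z → 1 ≤ Real.exp z / z := fun z hz => by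
    rw [one_le_div hz]
    linarith [Real.add_one_le_exp z]
  rcases le_total (t ^ 2) Y₀ with h9 | h9
  · have := mul_le_mul_of_nonneg_left (hone (α₀ * H * t ^ 2) (by linarith)) hκpos.le
    linarith
  · -- past the threshold the nonlinear term grows at least at rate `1/2` in `t²`
    have hz₀2 : 2 ≤ z₀ := by linarith
    have hzz : α₀ * H * t ^ 2 - z₀ = α₀ * H * (t ^ 2 - Y₀) := by rw [hz₀]; ring
    have h10 := exp_div_self_ge hz₀2 (z := α₀ * H * t ^ 2) (by nlinarith)
    rw [hzz] at h10
    have h11 := mul_le_mul_of_nonneg_left h10 hκpos.le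
    have h12 : κ * (Real.exp z₀ / z₀ * (1 + α₀ * H * (t ^ 2 - Y₀) / 2)) =
        κ * (Real.exp z₀ / z₀) + κ * Real.exp z₀ / (2 * Y₀) * (t ^ 2 - Y₀) := by
      rw [hz₀]
      field_simp
    have h13 : 1 / 2 ≤ κ * Real.exp z₀ / (2 * Y₀) := by
      rw [hκz, le_div_iff₀ (by positivity)]
      linarith
    have h14 := mul_le_mul_of_nonneg_right h13 (sub_nonneg.2 h9)
    have h15 := mul_le_mul_of_nonneg_left (hone z₀ (by linarith)) hκpos.le
    linarith
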